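/- There exists a numerical constant C > 0 with the following property. Let A > 0 and B > 0, and let (g(t))_{t≥0} be a family of finite nonnegative Borel measures on [0,∞) such that: (a) g(0)(E) ≥ A ∫_{E ∩ (0,B)} x^{−1/2} dx for every Borel set E ⊆ [0,∞); (b) g(t)([0,∞)) = g(0)([0,∞)) for all t ≥ 0; (c) for every ε > 0 and every t > 0 the integrand of 𝒦(φ_ε, g(τ)) is g(τ)⊗g(τ)⊗g(τ)-integrable for each τ, the map τ ↦ 𝒦(φ_ε, g(τ)) is integrable on [0,t], and N₀(g(t),ε) − N₀(g(s),ε) = ∫_s^t 𝒦(φ_ε, g(τ)) dτ for all 0 ≤ s < t. Then g(t)({0}) > 0 for every t > C A^{−2}. -/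

import Mathlib

open MeasureTheory Set
open scoped ENNReal

/-- The truncated quadratic test function `φ_ε`. -/
noncomputable def phiEps (ε x : ℝ) : ℝ := if x ≤ ε then (1 - x / ε) ^ 2 else 0

/-- `N₀(g,ε) = ∫_{[0,ε]} (1 - x/ε)² dg(x)` (real valued, for finite measures). -/
noncomputable def N0 (g : Measure ℝ) (ε : ℝ) : ℝ := ∫ x in Icc (0:ℝ) ε, (1 - x / ε) ^ 2 ∂g

/-- `N₀(g,ε)` valued in `[0,∞]`. -/
noncomputable def N0e (g : Measure ℝ) (ε : ℝ) : ℝ≥0∞ :=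
  ∫⁻ x in Icc (0:ℝ) ε, ENNReal.ofReal ((1 - x / ε) ^ 2) ∂g

/-- `N_α(g,ε) = ε^{-α} N₀(g,ε)`, valued in `[0,∞]`. -/
noncomputable def NalphaE (g : Measure ℝ) (α ε : ℝ) : ℝ≥0∞ :=
  ENNReal.ofReal (ε ^ (-α)) * N0e g ε

/-- `\underline{N}_α(g,ε) = inf_{0 < δ ≤ ε} N_α(g,δ)`. -/
noncomputable def uNe (g : Measure ℝ) (α ε : ℝ) : ℝ≥0∞ := ⨅ δ ∈ Ioc (0:ℝ) ε, NalphaE g α δ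

/-- `\overline{N}_α(g,ε) = sup_{0 < δ ≤ ε} N_α(g,δ)`. -/
noncomputable def oNe (g : Measure ℝ) (α ε : ℝ) : ℝ≥0∞ := ⨆ δ ∈ Ioc (0:ℝ) ε, NalphaE g α δ

/-- `\underline{N}_α(g) = lim_{ε→0⁺} \underline{N}_α(g,ε)`, a monotone limit in `[0,∞]`. -/
noncomputable def uNlim (g : Measure ℝ) (α : ℝ) : ℝ≥0∞ := ⨆ ε ∈ Ioi (0:ℝ), uNe g α ε

/-- `\overline{N}_α(g) = lim_{ε→0⁺} \overline{N}_α(g,ε)`, a monotone limit in `[0,∞]`. -/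
noncomputable def oNlim (g : Measure ℝ) (α : ℝ) : ℝ≥0∞ := ⨅ ε ∈ Ioi (0:ℝ), oNe g α ε

/-- The integrand of the collision functional `𝒦(φ_ε, g)` of the 4-wave kinetic equation,
with `Φ = min{√ω₁, √ω₂, √ω₃, √((ω₁+ω₂-ω₃)₊)}`. -/
noncomputable def wkeKernel (ε : ℝ) (ω : ℝ × ℝ × ℝ) : ℝ :=
  (min (Real.sqrt ω.1) (min (Real.sqrt ω.2.1) (min (Real.sqrt ω.2.2)
      (Real.sqrt (max (ω.1 + ω.2.1 - ω.2.2) 0)))) /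
    (Real.sqrt ω.1 * Real.sqrt ω.2.1 * Real.sqrt ω.2.2)) *
  (phiEps ε (max (ω.1 + ω.2.1 - ω.2.2) 0) + phiEps ε ω.2.2 - phiEps ε ω.1 - phiEps ε ω.2.1)

/-- The collision functional `𝒦(φ_ε, g)` as a triple integral over `(0,∞)³` against `g⊗g⊗g`. -/
noncomputable def Kcoll (g : Measure ℝ) (ε : ℝ) : ℝ :=
  ∫ ω in (Ioi (0:ℝ)) ×ˢ ((Ioi (0:ℝ)) ×ˢ (Ioi (0:ℝ))), wkeKernel ε ω ∂(g.prod (g.prod g))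

/-! ### Pointwise estimates -/

lemma phiEps_eq {ε : ℝ} (hε : 0 < ε) (x : ℝ) : phiEps ε x = (max (1 - x / ε) 0) ^ 2 := by
  unfold phiEps
  split_ifs with h
  · rw [max_eq_left]
    have : x / ε ≤ 1 := (div_le_one hε).2 h
    linarith
  · rw [max_eq_right]
    · norm_num
    · have : 1 ≤ x / ε := (one_le_div hε).2 (le_of_lt (not_le.1 h))
      linarith

lemma sqmax_convex {u v s : ℝ} (huv : v ≤ u) (hs : 0 ≤ s) :
    (max u 0) ^ 2 + (max v 0) ^ 2 ≤ (max (u + s) 0) ^ 2 + (max (v - s) 0) ^ 2 := by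
  rcases le_total u 0 with h1 | h1 <;> rcases le_total v 0 with h2 | h2 <;>
  rcases le_total (u + s) 0 with h3 | h3 <;> rcases le_total (v - s) 0 with h4 | h4 <;>
  simp only [max_eq_left, max_eq_right, h1, h2, h3, h4] <;> nlinarith

lemma sqmax_second {p q : ℝ} (_hq : 0 ≤ q) (hpq : 1 / 2 ≤ p + q) :
    min (q ^ 2) (1 / 4) ≤ (max (p + q) 0) ^ 2 + (max (p - q) 0) ^ 2 - 2 * (max p 0) ^ 2 := by
  rcases le_total p 0 with h1 | h1
  · refine (min_le_right _ _).trans ?_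
    rw [max_eq_right h1, max_eq_left (by linarith : (0:ℝ) ≤ p + q),
      max_eq_right (by linarith : p - q ≤ 0)]
    nlinarith
  · refine (min_le_left _ _).trans ?_
    rw [max_eq_left h1, max_eq_left (by linarith : (0:ℝ) ≤ p + q)]
    rcases le_total (p - q) 0 with h2 | h2
    · rw [max_eq_right h2]; nlinarith
    · rw [max_eq_left h2]; nlinarith

/-- symmetrised kernel -/
noncomputable def symK (ε x y z : ℝ) : ℝ :=
  wkeKernel ε (x, y, z) + wkeKernel ε (y, z, x) + wkeKernel ε (z, x, y)

lemma wke_swap (ε x y z : ℝ) : wkeKernel ε (x, y, z) = wkeKernel ε (y, x, z) := by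
  unfold wkeKernel
  simp only
  rw [add_comm x y, min_left_comm (√x), mul_comm (√x) (√y)]
  ring

lemma symK_rot (ε x y z : ℝ) : symK ε y z x = symK ε x y z := by
  unfold symK; ring

lemma symK_swap (ε x y z : ℝ) : symK ε x z y = symK ε x y z := by
  unfold symK
  rw [wke_swap ε x z y, wke_swap ε z y x, wke_swap ε y x z]; ring

lemma symK_ordered {ε x y z : ℝ} (hε : 0 < ε) (hx : 0 < x) (hxy : x ≤ y) (hyz : y ≤ z) :
    (phiEps ε (z + (y - x)) + phiEps ε (z - (y - x)) - 2 * phiEps ε z) / (√y * √z)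
      ≤ symK ε x y z := by
  have hy : 0 < y := hx.trans_le hxy
  have hz : 0 < z := hy.trans_le hyz
  have sx := Real.sqrt_pos.2 hx
  have sy := Real.sqrt_pos.2 hy
  have sz := Real.sqrt_pos.2 hz
  have sxy := Real.sqrt_le_sqrt hxy
  have syz := Real.sqrt_le_sqrt hyz
  have e1 : wkeKernel ε (y, z, x) = (√x / (√x * √y * √z)) *
      (phiEps ε (z + (y - x)) + phiEps ε x - phiEps ε y - phiEps ε z) := by
    unfold wkeKernel
    simp only
    rw [max_eq_left (by linarith : (0:ℝ) ≤ y + z - x)]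
    have : √x ≤ √(y + z - x) := Real.sqrt_le_sqrt (by linarith)
    rw [min_eq_left this, min_eq_right (sxy.trans syz), min_eq_right sxy]
    rw [show y + z - x = z + (y - x) by ring]
    congr 2; ring
  have e2 : wkeKernel ε (z, x, y) = (√x / (√x * √y * √z)) *
      (phiEps ε (z - (y - x)) + phiEps ε y - phiEps ε z - phiEps ε x) := by
    unfold wkeKernel
    simp only
    rw [max_eq_left (by linarith : (0:ℝ) ≤ z + x - y)]
    have : √x ≤ √(z + x - y) := Real.sqrt_le_sqrt (by linarith)
    rw [min_eq_left (le_min sxy this), min_eq_right (sxy.trans syz)]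
    rw [show z + x - y = z - (y - x) by ring]
    congr 2; ring
  have e3 : 0 ≤ wkeKernel ε (x, y, z) := by
    unfold wkeKernel
    simp only
    rcases le_total (x + y - z) 0 with h | h
    · rw [max_eq_right h]
      simp
    · rw [max_eq_left h]
      refine mul_nonneg (by positivity) ?_
      have := @sqmax_convex (1 - x / ε) (1 - y / ε) ((z - y) / ε)
        (by have : x / ε ≤ y / ε := by gcongr
            linarith) (div_nonneg (by linarith) hε.le)
      rw [phiEps_eq hε, phiEps_eq hε, phiEps_eq hε, phiEps_eq hε]
      rw [show 1 - x / ε + (z - y) / ε = 1 - (x + y - z) / ε by ring,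
        show 1 - y / ε - (z - y) / ε = 1 - z / ε by ring] at this
      linarith
  unfold symK
  rw [e1, e2]
  have : √x / (√x * √y * √z) = 1 / (√y * √z) := by field_simp
  rw [this]
  have : (phiEps ε (z + (y - x)) + phiEps ε (z - (y - x)) - 2 * phiEps ε z) / (√y * √z) =
    1 / (√y * √z) * (phiEps ε (z + (y - x)) + phiEps ε x - phiEps ε y - phiEps ε z) +
    1 / (√y * √z) * (phiEps ε (z - (y - x)) + phiEps ε y - phiEps ε z - phiEps ε x) := by ring
  linarith

lemma symK_ordered_nonneg {ε x y z : ℝ} (hε : 0 < ε) (hx : 0 < x) (hxy : x ≤ y) (hyz : y ≤ z) :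
    0 ≤ symK ε x y z := by
  refine le_trans ?_ (symK_ordered hε hx hxy hyz)
  refine div_nonneg ?_ (by positivity)
  have := @sqmax_convex (1 - z / ε) (1 - z / ε) ((y - x) / ε) le_rfl
    (div_nonneg (by linarith) hε.le)
  rw [phiEps_eq hε, phiEps_eq hε, phiEps_eq hε]
  rw [show 1 - z / ε + (y - x) / ε = 1 - (z - (y - x)) / ε by ring,
    show 1 - z / ε - (y - x) / ε = 1 - (z + (y - x)) / ε by ring] at this
  linarith

lemma symK_nonneg {ε x y z : ℝ} (hε : 0 < ε) (hx : 0 < x) (hy : 0 < y) (hz : 0 < z) :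
    0 ≤ symK ε x y z := by
  rcases le_total x y with h1 | h1 <;> rcases le_total y z with h2 | h2 <;>
    rcases le_total x z with h3 | h3
  · exact symK_ordered_nonneg hε hx h1 h2
  · exact symK_ordered_nonneg hε hx h1 h2
  · rw [← symK_swap]; exact symK_ordered_nonneg hε hx h3 h2
  · rw [← symK_rot, ← symK_rot]; exact symK_ordered_nonneg hε hz h3 h1
  · rw [← symK_rot, ← symK_swap]; exact symK_ordered_nonneg hε hy h1 h3
  · rw [← symK_rot]; exact symK_ordered_nonneg hε hy h2 h3
  · rw [← symK_rot, ← symK_rot, ← symK_swap]; exact symK_ordered_nonneg hε hz h2 h1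
  · rw [← symK_rot, ← symK_rot, ← symK_swap]; exact symK_ordered_nonneg hε hz h2 h1

/-- quantitative lower bound -/
lemma symK_lower_aux {ε θ M x y z : ℝ} (hε : 0 < ε) (hθ : 0 < θ) (hθ1 : θ ≤ 1)
    (hx : 0 < x) (hx1 : x ≤ θ * ε / 4) (hy : θ * ε ≤ y) (hyz : y ≤ z)
    (hzy : z - y ≤ θ * ε / 4) (hzM : z ≤ M * ε) :
    θ ^ 2 / 4 / (M * ε) ≤ symK ε x y z := by
  have hθε : 0 < θ * ε := by positivity
  have hθε1 : θ * ε ≤ ε := by nlinarith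
  refine le_trans ?_ (symK_ordered hε hx (by linarith) hyz)
  have hy0 : 0 < y := by linarith
  have hz0 : 0 < z := by linarith
  have h1 : √y * √z ≤ M * ε := by
    calc √y * √z ≤ √z * √z := by gcongr
      _ = z := Real.mul_self_sqrt hz0.le
      _ ≤ _ := hzM
  have hq : θ / 2 ≤ (y - x) / ε := by
    rw [le_div_iff₀ hε]; nlinarith
  have := @sqmax_second (1 - z / ε) ((y - x) / ε) (by linarith)
    (by rw [show 1 - z / ε + (y - x) / ε = 1 - (z - y + x) / ε by ring]
        have : (z - y + x) / ε ≤ 1 / 2 := by rw [div_le_iff₀ hε]; linarith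
        linarith)
  rw [show 1 - z / ε + (y - x) / ε = 1 - (z - (y - x)) / ε by ring,
    show 1 - z / ε - (y - x) / ε = 1 - (z + (y - x)) / ε by ring] at this
  have hm : θ ^ 2 / 4 ≤ min (((y - x) / ε) ^ 2) (1 / 4) := by
    refine le_min ?_ (by nlinarith)
    calc θ ^ 2 / 4 = (θ / 2) ^ 2 := by ring
      _ ≤ _ := by gcongr
  rw [phiEps_eq hε, phiEps_eq hε, phiEps_eq hε]
  refine div_le_div₀ ?_ ?_ (by positivity) h1
  · nlinarith
  · linarith

lemma symK_lower {ε θ M x y z : ℝ} (hε : 0 < ε) (hθ : 0 < θ) (hθ1 : θ ≤ 1)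
    (hx : 0 < x) (hx1 : x ≤ θ * ε / 4) (hy : θ * ε ≤ y) (hz : θ * ε ≤ z)
    (hzy : |z - y| ≤ θ * ε / 4) (hyM : y ≤ M * ε) (hzM : z ≤ M * ε) :
    θ ^ 2 / 4 / (M * ε) ≤ symK ε x y z := by
  have := abs_le.1 hzy
  rcases le_total y z with h | h
  · exact symK_lower_aux hε hθ hθ1 hx hx1 hy h (by linarith) hzM
  · rw [← symK_swap]
    exact symK_lower_aux hε hθ hθ1 hx hx1 hz h (by linarith) hyM

/-! ### Integral estimates -/

lemma rot_measurePreserving (ν : Measure ℝ) [IsFiniteMeasure ν] :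
    MeasurePreserving (MeasurableEquiv.prodComm.trans MeasurableEquiv.prodAssoc :
      ℝ × ℝ × ℝ ≃ᵐ ℝ × ℝ × ℝ) (ν.prod (ν.prod ν)) (ν.prod (ν.prod ν)) := by
  have h1 : MeasurePreserving (Prod.swap : ℝ × ℝ × ℝ → (ℝ × ℝ) × ℝ) (ν.prod (ν.prod ν))
    ((ν.prod ν).prod ν) := Measure.measurePreserving_swap
  have h2 := measurePreserving_prodAssoc ν ν ν
  exact h2.comp h1

lemma Kcoll_sym (g : Measure ℝ) [IsFiniteMeasure g] (ε : ℝ)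
    (hker : Integrable (wkeKernel ε) ((g.prod (g.prod g)).restrict
          ((Ioi (0:ℝ)) ×ˢ ((Ioi (0:ℝ)) ×ˢ (Ioi (0:ℝ)))))) :
    Integrable (fun ω : ℝ × ℝ × ℝ => symK ε ω.1 ω.2.1 ω.2.2) ((g.prod (g.prod g)).restrict
          ((Ioi (0:ℝ)) ×ˢ ((Ioi (0:ℝ)) ×ˢ (Ioi (0:ℝ))))) ∧
    3 * Kcoll g ε = ∫ ω in (Ioi (0:ℝ)) ×ˢ ((Ioi (0:ℝ)) ×ˢ (Ioi (0:ℝ))),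
      symK ε ω.1 ω.2.1 ω.2.2 ∂(g.prod (g.prod g)) := by
  unfold Kcoll
  rw [← Measure.prod_restrict, ← Measure.prod_restrict] at hker ⊢
  set ν := g.restrict (Ioi (0:ℝ)) with hν
  have hr := rot_measurePreserving ν
  have i1 := (hr.integrable_comp_emb (MeasurableEquiv.measurableEmbedding _)).2 hker
  have i2 := (hr.integrable_comp_emb (MeasurableEquiv.measurableEmbedding _)).2 i1
  have j1 := hr.integral_comp' (wkeKernel ε)
  have j2 := hr.integral_comp' (wkeKernel ε ∘ (MeasurableEquiv.prodComm.trans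
    MeasurableEquiv.prodAssoc : ℝ × ℝ × ℝ ≃ᵐ ℝ × ℝ × ℝ))
  have hs : (fun ω : ℝ × ℝ × ℝ => symK ε ω.1 ω.2.1 ω.2.2) =
    fun ω => wkeKernel ε ω + (wkeKernel ε ∘ (MeasurableEquiv.prodComm.trans
      MeasurableEquiv.prodAssoc : ℝ × ℝ × ℝ ≃ᵐ ℝ × ℝ × ℝ)) ω +
      ((wkeKernel ε ∘ (MeasurableEquiv.prodComm.trans
      MeasurableEquiv.prodAssoc : ℝ × ℝ × ℝ ≃ᵐ ℝ × ℝ × ℝ)) ∘ (MeasurableEquiv.prodComm.trans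
      MeasurableEquiv.prodAssoc : ℝ × ℝ × ℝ ≃ᵐ ℝ × ℝ × ℝ)) ω := by
    funext ω
    rfl
  rw [hs]
  refine ⟨(hker.add i1).add i2, ?_⟩
  have k1 := integral_add (hker.add i1) i2
  have k2 := integral_add hker i1
  simp only [Pi.add_apply, Function.comp_apply] at j1 j2 k1 k2 ⊢
  rw [k1, k2, j2, j1]
  ring

lemma Kcoll_nonneg (g : Measure ℝ) [IsFiniteMeasure g] {ε : ℝ} (hε : 0 < ε)
    (hker : Integrable (wkeKernel ε) ((g.prod (g.prod g)).restrict
          ((Ioi (0:ℝ)) ×ˢ ((Ioi (0:ℝ)) ×ˢ (Ioi (0:ℝ)))))) : 0 ≤ Kcoll g ε := by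
  have h := (Kcoll_sym g ε hker).2
  have : 0 ≤ ∫ ω in (Ioi (0:ℝ)) ×ˢ ((Ioi (0:ℝ)) ×ˢ (Ioi (0:ℝ))),
      symK ε ω.1 ω.2.1 ω.2.2 ∂(g.prod (g.prod g)) := by
    refine setIntegral_nonneg (by measurability) ?_
    rintro ⟨x, y, z⟩ ⟨hx, hy, hz⟩
    exact symK_nonneg hε hx hy hz
  linarith

lemma Kcoll_lower (g : Measure ℝ) [IsFiniteMeasure g] {ε c : ℝ} (hε : 0 < ε)
    (hker : Integrable (wkeKernel ε) ((g.prod (g.prod g)).restrict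
          ((Ioi (0:ℝ)) ×ˢ ((Ioi (0:ℝ)) ×ˢ (Ioi (0:ℝ))))))
    {X W : Set ℝ} (hX : MeasurableSet X) (hW : MeasurableSet W)
    (hX0 : X ⊆ Ioi 0) (hW0 : W ⊆ Ioi 0)
    (hc : ∀ x ∈ X, ∀ y ∈ W, ∀ z ∈ W, c ≤ symK ε x y z) :
    c * (g.real X * (g.real W * g.real W)) ≤ 3 * Kcoll g ε := by
  obtain ⟨hi, h⟩ := Kcoll_sym g ε hker
  rw [h]
  have hP : MeasurableSet ((Ioi (0:ℝ)) ×ˢ ((Ioi (0:ℝ)) ×ˢ (Ioi (0:ℝ)))) := by measurability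
  have hS : MeasurableSet (X ×ˢ (W ×ˢ W)) := hX.prod (hW.prod hW)
  have hsub : (X ×ˢ (W ×ˢ W)) ⊆ (Ioi (0:ℝ)) ×ˢ ((Ioi (0:ℝ)) ×ˢ (Ioi (0:ℝ))) :=
    prod_mono hX0 (prod_mono hW0 hW0)
  calc c * (g.real X * (g.real W * g.real W))
      = ∫ ω in X ×ˢ (W ×ˢ W), c ∂(g.prod (g.prod g)) := by
        rw [setIntegral_const, measureReal_prod_prod, measureReal_prod_prod, smul_eq_mul, mul_comm]
    _ ≤ ∫ ω in X ×ˢ (W ×ˢ W), symK ε ω.1 ω.2.1 ω.2.2 ∂(g.prod (g.prod g)) := by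
        refine setIntegral_mono_on (integrable_const c) (IntegrableOn.mono_set hi hsub) hS ?_
        rintro ⟨x, y, z⟩ ⟨hx, hy, hz⟩
        exact hc x hx y hy z hz
    _ ≤ _ := by
        refine setIntegral_mono_set hi ?_ (Filter.Eventually.of_forall hsub)
        filter_upwards [ae_restrict_mem hP]
        rintro ⟨x, y, z⟩ ⟨hx, hy, hz⟩
        exact symK_nonneg hε hx hy hz

lemma N0_integrable (g : Measure ℝ) [IsFiniteMeasure g] (ε : ℝ) :
    IntegrableOn (fun x : ℝ => (1 - x / ε) ^ 2) (Icc 0 ε) g :=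
  ContinuousOn.integrableOn_compact isCompact_Icc (by fun_prop)

lemma N0_le (g : Measure ℝ) [IsFiniteMeasure g] {ε : ℝ} (hε : 0 < ε) :
    N0 g ε ≤ g.real (Icc 0 ε) := by
  unfold N0
  calc ∫ x in Icc (0:ℝ) ε, (1 - x / ε) ^ 2 ∂g ≤ ∫ x in Icc (0:ℝ) ε, (1:ℝ) ∂g := by
        refine setIntegral_mono_on (N0_integrable g ε) (integrable_const _) measurableSet_Icc ?_
        rintro x ⟨h0, h1⟩
        have : x / ε ≤ 1 := (div_le_one hε).2 h1
        have : 0 ≤ x / ε := by positivity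
        nlinarith
    _ = _ := by simp

lemma le_N0 (g : Measure ℝ) [IsFiniteMeasure g] {ε θ : ℝ} (hε : 0 < ε) (h0 : 0 ≤ θ)
    (h1 : θ ≤ 1) : (1 - θ) ^ 2 * g.real (Icc 0 (θ * ε)) ≤ N0 g ε := by
  unfold N0
  have hsub : Icc 0 (θ * ε) ⊆ Icc 0 ε := Icc_subset_Icc_right (by nlinarith)
  calc (1 - θ) ^ 2 * g.real (Icc 0 (θ * ε)) = ∫ x in Icc (0:ℝ) (θ * ε), (1 - θ) ^ 2 ∂g := by
        rw [setIntegral_const, smul_eq_mul, mul_comm]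
    _ ≤ ∫ x in Icc (0:ℝ) (θ * ε), (1 - x / ε) ^ 2 ∂g := by
        refine setIntegral_mono_on (integrable_const _) ((N0_integrable g ε).mono_set hsub)
          measurableSet_Icc ?_
        rintro x ⟨hx0, hx1⟩
        have : x / ε ≤ θ := (div_le_iff₀ hε).2 hx1
        gcongr
    _ ≤ _ := by
        refine setIntegral_mono_set (N0_integrable g ε) ?_ (Filter.Eventually.of_forall hsub)
        exact Filter.Eventually.of_forall fun x => by positivity

/-- small intervals -/
lemma small_Icc (g : Measure ℝ) [IsFiniteMeasure g] (h : g {0} = 0) {v : ℝ} (hv : 0 < v) :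
    ∃ r : ℝ, 0 < r ∧ ∀ ε, ε < r → 0 < ε → g.real (Icc 0 ε) < v := by
  have h1 := tendsto_measure_Icc_nhdsWithin_right' g (0:ℝ)
  rw [h] at h1
  have h2 := (h1.eventually (gt_mem_nhds (ENNReal.ofReal_pos.2 hv)))
  rw [eventually_nhdsWithin_iff, Metric.eventually_nhds_iff] at h2
  obtain ⟨r, hr, h3⟩ := h2
  refine ⟨r, hr, fun ε h4 h5 => ?_⟩
  have h6 := h3 (y := ε) (by rw [Real.dist_eq, sub_zero, abs_of_pos h5]; exact h4) h5
  have h7 : g (Icc 0 ε) < ENNReal.ofReal v :=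
    (measure_mono (Icc_subset_Icc (by linarith) (by linarith))).trans_lt h6
  exact (ENNReal.lt_ofReal_iff_toReal_lt (measure_ne_top _ _)).1 h7

lemma pigeon (g : Measure ℝ) [IsFiniteMeasure g] {α β w : ℝ} (hw : 0 < w) (n : ℕ)
    (hn : 0 < n) (hnw : β ≤ α + n * w) :
    ∃ W : Set ℝ, MeasurableSet W ∧ W ⊆ Ioc α β ∧ (∀ y ∈ W, ∀ z ∈ W, |z - y| ≤ w) ∧
      g.real (Ioc α β) / n ≤ g.real W := by
  let F : ℕ → Set ℝ := fun i => Ioc (α + i * w) (α + (i + 1) * w) ∩ Ioc α β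
  have hcov : Ioc α β ⊆ ⋃ i ∈ Finset.range n, F i := by
    intro x hx
    have hxα : 0 < x - α := by linarith [hx.1]
    obtain ⟨m, hm⟩ : ∃ m : ℕ, ⌈(x - α) / w⌉₊ = m + 1 :=
      Nat.exists_eq_succ_of_ne_zero (Nat.ceil_pos.2 (by positivity)).ne'
    have h1 := Nat.le_ceil ((x - α) / w)
    have h2 := Nat.ceil_lt_add_one (a := (x - α) / w) (by positivity)
    have h3 : ⌈(x - α) / w⌉₊ ≤ n := Nat.ceil_le.2 (by
      rw [div_le_iff₀ hw]; linarith [hx.2])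
    rw [hm] at h1 h2 h3
    push_cast at h1 h2
    rw [div_le_iff₀ hw] at h1
    have h4 : (m : ℝ) < (x - α) / w := by linarith
    rw [lt_div_iff₀ hw] at h4
    simp only [mem_iUnion, Finset.mem_range]
    exact ⟨m, h3, ⟨by linarith, by linarith⟩, hx⟩
  have hsum : g.real (Ioc α β) ≤ ∑ i ∈ Finset.range n, g.real (F i) :=
    (measureReal_mono hcov (measure_ne_top _ _)).trans (measureReal_biUnion_finset_le _ _)
  have hn' : (0:ℝ) < n := by exact_mod_cast hn
  obtain ⟨i, _, hi⟩ := Finset.exists_le_of_sum_le (s := Finset.range n)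
    (f := fun _ => g.real (Ioc α β) / n) (g := fun i => g.real (F i))
    (Finset.nonempty_range_iff.2 hn.ne') (by
      simp only [Finset.sum_const, Finset.card_range, nsmul_eq_mul]
      rw [mul_div_cancel₀ _ hn'.ne']; exact hsum)
  refine ⟨F i, measurableSet_Ioc.inter measurableSet_Ioc, inter_subset_right, ?_, hi⟩
  rintro y ⟨⟨h1, h2⟩, _⟩ z ⟨⟨h3, h4⟩, _⟩
  rw [abs_le]
  constructor <;> linarith

/-! ### The quantitative lower bound of the collision functional -/

lemma Kcoll_static (g : Measure ℝ) [IsFiniteMeasure g] (h0 : g {0} = 0) {δ η a : ℝ}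
    (hδ : 0 < δ) (hη : 0 < η) (hη1 : η ≤ 1) (ha : 0 < a)
    (hker : Integrable (wkeKernel δ) ((g.prod (g.prod g)).restrict
          ((Ioi (0:ℝ)) ×ˢ ((Ioi (0:ℝ)) ×ˢ (Ioi (0:ℝ))))))
    (h1 : N0 g δ ≤ 16 * a * √δ)
    (h2 : a * √(256 * (1 + η) * δ) ≤ N0 g (256 * (1 + η) * δ))
    (h3 : a * √(η * δ / 64) ≤ N0 g (η * δ / 64)) :
    η ^ 7 * a ^ 3 * √δ / 10 ^ 16 ≤ Kcoll g δ := by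
  have hsδ : 0 < √δ := Real.sqrt_pos.2 hδ
  have hss : √δ ^ 2 = δ := Real.sq_sqrt hδ.le
  -- mass near zero
  have hX : η * a * √δ / 8 ≤ g.real (Ioc 0 (η * δ / 64)) := by
    have e1 : g.real (Ioc 0 (η * δ / 64)) = g.real (Icc 0 (η * δ / 64)) := by
      have : Icc 0 (η * δ / 64) = {0} ∪ Ioc 0 (η * δ / 64) := by
        rw [← Icc_self, Icc_union_Ioc_eq_Icc le_rfl (by positivity)]
      rw [this]
      refine le_antisymm (measureReal_mono subset_union_right) ?_
      refine (measureReal_union_le _ _).trans ?_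
      simp [Measure.real, h0]
    rw [e1]
    refine le_trans ?_ (h3.trans (N0_le g (by positivity)))
    have : η * √δ / 8 ≤ √(η * δ / 64) := by
      apply Real.le_sqrt_of_sq_le
      rw [div_pow, mul_pow, hss]
      nlinarith [mul_pos hη hδ]
    calc η * a * √δ / 8 = a * (η * √δ / 8) := by ring
      _ ≤ _ := by gcongr
  -- mass of the annulus
  have hm : 2 * η * a * √δ ≤ g.real (Ioc (η / 16 * δ) (256 * (1 + η) * δ)) := by
    have l1 := le_N0 g hδ (θ := η / 16) (by positivity) (by linarith)
    have l2 := N0_le g (ε := 256 * (1 + η) * δ) (by positivity)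
    have l3 : g.real (Icc 0 (256 * (1 + η) * δ)) ≤
        g.real (Icc 0 (η / 16 * δ)) + g.real (Ioc (η / 16 * δ) (256 * (1 + η) * δ)) := by
      rw [← Icc_union_Ioc_eq_Icc (b := η / 16 * δ) (by positivity) (by gcongr; linarith)]
      exact measureReal_union_le _ _
    have l4 : 16 * (1 + η / 3) * √δ ≤ √(256 * (1 + η) * δ) := by
      apply Real.le_sqrt_of_sq_le
      rw [mul_pow, hss]
      gcongr
      nlinarith
    have l5 : a * (16 * (1 + η / 3) * √δ) ≤ a * √(256 * (1 + η) * δ) := by gcongr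
    set m := g.real (Icc 0 (η / 16 * δ)) with hmdef
    have hm0 : 0 ≤ m := measureReal_nonneg
    have l6 : 1 ≤ (1 + η / 6) * (1 - η / 16) ^ 2 := by nlinarith [mul_pos hη hη]
    have l7 : m ≤ (1 + η / 6) * (16 * a * √δ) := by
      calc m = 1 * m := by ring
        _ ≤ ((1 + η / 6) * (1 - η / 16) ^ 2) * m := by gcongr
        _ = (1 + η / 6) * ((1 - η / 16) ^ 2 * m) := by ring
        _ ≤ _ := mul_le_mul_of_nonneg_left (l1.trans h1) (by positivity)
    have : 0 < η * a * √δ := by positivity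
    nlinarith
  -- pigeonhole
  have hnpos : 0 < 32768 / η := by positivity
  obtain ⟨W, hWm, hWs, hWd, hW⟩ := pigeon g (α := η / 16 * δ) (β := 256 * (1 + η) * δ)
    (w := η * δ / 64) (by positivity) ⌈32768 / η⌉₊ (Nat.ceil_pos.2 hnpos) (by
      have := Nat.le_ceil (32768 / η)
      have : 32768 / η * (η * δ / 64) ≤ ⌈32768 / η⌉₊ * (η * δ / 64) := by gcongr
      have e : 32768 / η * (η * δ / 64) = 512 * δ := by field_simp; norm_num
      have : 0 < η * δ := by positivity
      nlinarith)
  have hW' : η ^ 2 * a * √δ / 20000 ≤ g.real W := by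
    refine le_trans ?_ hW
    have hn0 : (0:ℝ) < ⌈32768 / η⌉₊ := by exact_mod_cast Nat.ceil_pos.2 hnpos
    have hn1 : (⌈32768 / η⌉₊ : ℝ) ≤ 40000 / η := by
      have := Nat.ceil_lt_add_one hnpos.le
      have e : 40000 / η = 32768 / η + 7232 / η := by ring
      have : 1 ≤ 7232 / η := by rw [le_div_iff₀ hη]; linarith
      linarith
    calc η ^ 2 * a * √δ / 20000 = (2 * η * a * √δ) / (40000 / η) := by field_simp; norm_num
      _ ≤ (2 * η * a * √δ) / ⌈32768 / η⌉₊ := by gcongr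
      _ ≤ _ := by gcongr
  have hfin := Kcoll_lower g hδ hker (X := Ioc 0 (η * δ / 64)) (W := W)
    (c := (η / 16) ^ 2 / 4 / (512 * δ)) measurableSet_Ioc hWm
    (fun x hx => hx.1) (fun y hy => lt_of_le_of_lt (by positivity) (hWs hy).1) (by
      intro x hx y hy z hz
      have hy1 := hWs hy
      have hz1 := hWs hz
      have hb : 256 * (1 + η) * δ ≤ 512 * δ := by gcongr; linarith
      refine symK_lower hδ (by positivity) (by linarith) hx.1 ?_ hy1.1.le hz1.1.le ?_
        (hy1.2.trans hb) (hz1.2.trans hb)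
      · have := hx.2; linarith
      · have := hWd y hy z hz; linarith)
  have hlow : (η / 16) ^ 2 / 4 / (512 * δ) * ((η * a * √δ / 8) *
      ((η ^ 2 * a * √δ / 20000) * (η ^ 2 * a * √δ / 20000))) ≤ 3 * Kcoll g δ := by
    refine le_trans ?_ hfin
    gcongr
  have e : (η / 16) ^ 2 / 4 / (512 * δ) * ((η * a * √δ / 8) *
      ((η ^ 2 * a * √δ / 20000) * (η ^ 2 * a * √δ / 20000)))
      = η ^ 7 * a ^ 3 * √δ / 1677721600000000 := by
    rw [show (η / 16) ^ 2 / 4 / (512 * δ) * ((η * a * √δ / 8) *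
      ((η ^ 2 * a * √δ / 20000) * (η ^ 2 * a * √δ / 20000)))
      = (√δ ^ 2 / δ) * (η ^ 7 * a ^ 3 * √δ / 1677721600000000) by field_simp; norm_num,
      hss, div_self hδ.ne', one_mul]
  rw [e] at hlow
  have : 0 < η ^ 7 * a ^ 3 * √δ := by positivity
  linarith

/-! ### Evolution -/

def Weak (g : ℝ → Measure ℝ) : Prop :=
  ∀ ε : ℝ, 0 < ε →
      (∀ τ : ℝ, 0 ≤ τ → Integrable (wkeKernel ε)
        (((g τ).prod ((g τ).prod (g τ))).restrict
          ((Ioi (0:ℝ)) ×ˢ ((Ioi (0:ℝ)) ×ˢ (Ioi (0:ℝ)))))) ∧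
      (∀ t : ℝ, 0 < t → IntegrableOn (fun τ => Kcoll (g τ) ε) (Icc (0:ℝ) t)) ∧
      (∀ s t : ℝ, 0 ≤ s → s < t →
        N0 (g t) ε - N0 (g s) ε = ∫ τ in s..t, Kcoll (g τ) ε)

lemma N0_growth {g : ℝ → Measure ℝ} (hc : Weak g) {ε s t c : ℝ} (hε : 0 < ε) (hs : 0 ≤ s)
    (hst : s < t) (h : ∀ τ ∈ Icc s t, c ≤ Kcoll (g τ) ε) :
    (t - s) * c ≤ N0 (g t) ε - N0 (g s) ε := by
  obtain ⟨_, h2, h3⟩ := hc ε hε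
  rw [h3 s t hs hst]
  have hi : IntervalIntegrable (fun τ => Kcoll (g τ) ε) volume s t := by
    rw [intervalIntegrable_iff_integrableOn_Icc_of_le hst.le]
    exact (h2 t (hs.trans_lt hst)).mono_set (Icc_subset_Icc_left hs)
  have := intervalIntegral.integral_mono_on hst.le
    (intervalIntegrable_const (c := c)) hi h
  simpa using this

lemma N0_mono {g : ℝ → Measure ℝ} (hf : ∀ t : ℝ, 0 ≤ t → IsFiniteMeasure (g t)) (hc : Weak g)
    {ε s t : ℝ} (hε : 0 < ε) (hs : 0 ≤ s) (hst : s ≤ t) : N0 (g s) ε ≤ N0 (g t) ε := by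
  rcases hst.eq_or_lt with rfl | hst
  · exact le_rfl
  · have := N0_growth hc hε hs hst (c := 0) (fun τ hτ => by
      have := hf τ (hs.trans hτ.1)
      exact Kcoll_nonneg _ hε ((hc ε hε).1 τ (hs.trans hτ.1)))
    linarith

lemma step {g : ℝ → Measure ℝ} (hf : ∀ t : ℝ, 0 ≤ t → IsFiniteMeasure (g t)) (hc : Weak g)
    {t s a b η : ℝ} (ht : 0 ≤ t) (hts : t < s) (ha : 0 < a) (hη : 0 < η) (hη1 : η ≤ 1)
    (h0 : ∀ τ ∈ Icc t s, g τ {0} = 0)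
    (hn : ∀ δ, 0 < δ → δ ≤ b → a * √δ ≤ N0 (g t) δ)
    (hT : 16 * 10 ^ 16 ≤ (s - t) * η ^ 7 * a ^ 2) :
    ∀ δ, 0 < δ → 256 * (1 + η) * δ ≤ b → 16 * a * √δ ≤ N0 (g s) δ := by
  intro δ hδ hδb
  by_contra! hlt
  have hsδ : 0 < √δ := Real.sqrt_pos.2 hδ
  have hgrow := N0_growth hc hδ ht hts (c := η ^ 7 * a ^ 3 * √δ / 10 ^ 16) (by
    intro τ hτ
    have hτ0 : 0 ≤ τ := ht.trans hτ.1
    have := hf τ hτ0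
    refine Kcoll_static (g τ) (h0 τ hτ) hδ hη hη1 ha ((hc δ hδ).1 τ hτ0) ?_ ?_ ?_
    · exact (N0_mono hf hc hδ hτ0 hτ.2).trans hlt.le
    · exact (hn _ (by positivity) hδb).trans (N0_mono hf hc (by positivity) ht hτ.1)
    · refine (hn _ (by positivity) ?_).trans (N0_mono hf hc (by positivity) ht hτ.1)
      refine le_trans ?_ hδb
      have : 0 < η * δ := by positivity
      nlinarith)
  have hpos : 0 ≤ N0 (g t) δ := by
    unfold N0
    exact integral_nonneg fun x => by positivity
  have : 16 * 10 ^ 16 * (a * √δ / 10 ^ 16) ≤ ((s - t) * η ^ 7 * a ^ 2) * (a * √δ / 10 ^ 16) := by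
    gcongr
  have e : ((s - t) * η ^ 7 * a ^ 2) * (a * √δ / 10 ^ 16) =
    (s - t) * (η ^ 7 * a ^ 3 * √δ / 10 ^ 16) := by ring
  linarith

lemma start_bound (g : Measure ℝ) [IsFiniteMeasure g] {A B : ℝ} (hA : 0 < A)
    (h : ∀ E : Set ℝ, MeasurableSet E →
      ENNReal.ofReal A *
        (∫⁻ x in E ∩ Ioo (0:ℝ) B, ENNReal.ofReal (x ^ (-(1/2) : ℝ))) ≤ g E)
    {δ : ℝ} (hδ : 0 < δ) (hδB : δ ≤ B) : A / 8 * √δ ≤ N0 g δ := by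
  have h1 := le_N0 g hδ (θ := 1 / 2) (by norm_num) (by norm_num)
  have h2 := h (Icc 0 (1 / 2 * δ)) measurableSet_Icc
  have hs : Ioc 0 (1 / 2 * δ) ⊆ Icc 0 (1 / 2 * δ) ∩ Ioo (0:ℝ) B := fun x hx =>
    ⟨⟨hx.1.le, hx.2⟩, hx.1, by have := hx.2; linarith⟩
  have h3 : ENNReal.ofReal (√δ / 2) ≤
      ∫⁻ x in Icc 0 (1 / 2 * δ) ∩ Ioo (0:ℝ) B, ENNReal.ofReal (x ^ (-(1/2) : ℝ)) := by
    calc ENNReal.ofReal (√δ / 2)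
        = ENNReal.ofReal (δ ^ (-(1/2) : ℝ)) * volume (Ioc 0 (1 / 2 * δ)) := by
          rw [Real.volume_Ioc, ← ENNReal.ofReal_mul (by positivity)]
          congr 1
          rw [Real.rpow_neg hδ.le, ← Real.sqrt_eq_rpow]
          have : √δ ^ 2 = δ := Real.sq_sqrt hδ.le
          have : 0 < √δ := Real.sqrt_pos.2 hδ
          field_simp
          linarith
      _ = ∫⁻ x in Ioc 0 (1 / 2 * δ), ENNReal.ofReal (δ ^ (-(1/2) : ℝ)) := by
          rw [setLIntegral_const]
      _ ≤ ∫⁻ x in Ioc 0 (1 / 2 * δ), ENNReal.ofReal (x ^ (-(1/2) : ℝ)) := by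
          refine setLIntegral_mono' measurableSet_Ioc ?_
          intro x hx
          apply ENNReal.ofReal_le_ofReal
          apply Real.rpow_le_rpow_of_nonpos hx.1 _ (by norm_num)
          have := hx.2; linarith
      _ ≤ _ := lintegral_mono_set hs
  have h4 : ENNReal.ofReal (A * (√δ / 2)) ≤ g (Icc 0 (1 / 2 * δ)) := by
    rw [ENNReal.ofReal_mul hA.le]
    refine le_trans ?_ h2
    gcongr
  have h5 : A * (√δ / 2) ≤ g.real (Icc 0 (1 / 2 * δ)) :=
    (ENNReal.ofReal_le_iff_le_toReal (measure_ne_top _ _)).1 h4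
  nlinarith

theorem stmt5 : ∃ C : ℝ, 0 < C ∧
    ∀ (A B : ℝ), 0 < A → 0 < B → ∀ g : ℝ → Measure ℝ,
    (∀ t : ℝ, 0 ≤ t → IsFiniteMeasure (g t)) →
    (∀ t : ℝ, 0 ≤ t → g t (Iio (0:ℝ)) = 0) →
    -- (a) the initial datum dominates the measure with density `A x^{-1/2}` on `(0,B)`
    (∀ E : Set ℝ, MeasurableSet E →
      ENNReal.ofReal A *
        (∫⁻ x in E ∩ Ioo (0:ℝ) B, ENNReal.ofReal (x ^ (-(1/2) : ℝ))) ≤ g 0 E) →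
    -- (b) conservation of the total mass
    (∀ t : ℝ, 0 ≤ t → g t univ = g 0 univ) →
    -- (c) the weak formulation of the equation for the test functions `φ_ε`
    (∀ ε : ℝ, 0 < ε →
      (∀ τ : ℝ, 0 ≤ τ → Integrable (wkeKernel ε)
        (((g τ).prod ((g τ).prod (g τ))).restrict
          ((Ioi (0:ℝ)) ×ˢ ((Ioi (0:ℝ)) ×ˢ (Ioi (0:ℝ)))))) ∧
      (∀ t : ℝ, 0 < t → IntegrableOn (fun τ => Kcoll (g τ) ε) (Icc (0:ℝ) t)) ∧
      (∀ s t : ℝ, 0 ≤ s → s < t →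
        N0 (g t) ε - N0 (g s) ε = ∫ τ in s..t, Kcoll (g τ) ε)) →
    ∀ t : ℝ, C / A ^ 2 < t → 0 < g t ({0} : Set ℝ) := by
  refine ⟨16 * 10 ^ 16 * 2 ^ 21, by positivity, ?_⟩
  intro A B hA hB g hf _ hinit _ hc T hT
  replace hc : Weak g := hc
  have hT0 : 0 < T := lt_trans (by positivity) hT
  by_contra hcon
  have hz : g T {0} = 0 := by simpa using hcon
  have hfT := hf T hT0.le
  -- no condensate before `T`
  have h0 : ∀ τ, 0 ≤ τ → τ ≤ T → g τ {0} = 0 := by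
    intro τ hτ hτT
    have hfτ := hf τ hτ
    have hle : (g τ).real {0} ≤ 0 := by
      refine le_of_forall_gt_imp_ge_of_dense fun v hv => ?_
      obtain ⟨r, hr, hr2⟩ := small_Icc (g T) hz hv
      have l1 := le_N0 (g τ) (ε := r / 2) (by positivity) le_rfl zero_le_one
      have l2 := N0_mono hf hc (ε := r / 2) (by positivity) hτ hτT
      have l3 := N0_le (g T) (ε := r / 2) (by positivity)
      have l4 := hr2 (r / 2) (by linarith) (by positivity)
      simp only [zero_mul, Icc_self] at l1
      linarith
    have := le_antisymm hle measureReal_nonneg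
    rwa [measureReal_eq_zero_iff] at this
  set D : ℝ := 16 * 10 ^ 16 * 2 ^ 21 / A ^ 2 with hD
  have hDpos : 0 < D := by positivity
  have key : ∀ k : ℕ, ∀ δ, 0 < δ → δ ≤ B * (1 / 256) ^ k * (1 + (1 / 2) ^ k) / 2 →
      16 ^ k * (A / 8) * √δ ≤ N0 (g (D * (1 - (1 / 2) ^ k))) δ := by
    intro k
    induction k with
    | zero =>
      intro δ hδ hδB
      have hf0 := hf 0 le_rfl
      norm_num at hδB ⊢
      exact start_bound (g 0) hA hinit hδ hδB
    | succ k ih =>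
      have hp : (0:ℝ) < (1 / 2) ^ k := by positivity
      have hp1 : ((1:ℝ) / 2) ^ k ≤ 1 := pow_le_one₀ (by norm_num) (by norm_num)
      have ht0 : 0 ≤ D * (1 - (1 / 2) ^ k) := mul_nonneg hDpos.le (by linarith)
      have hst := step hf hc (t := D * (1 - (1 / 2) ^ k)) (s := D * (1 - (1 / 2) ^ (k + 1)))
        (a := 16 ^ k * (A / 8)) (η := (1 / 2) ^ k / 4)
        (b := B * (1 / 256) ^ k * (1 + (1 / 2) ^ k) / 2) ht0
        (by rw [pow_succ]; gcongr; linarith) (by positivity) (by positivity) (by linarith)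
        (by
          intro τ hτ
          refine h0 τ (ht0.trans hτ.1) (hτ.2.trans (le_trans ?_ hT.le))
          have : (0:ℝ) < (1 / 2) ^ (k + 1) := by positivity
          nlinarith)
        ih (by
          have e : (D * (1 - (1 / 2) ^ (k + 1)) - D * (1 - (1 / 2) ^ k)) * ((1 / 2) ^ k / 4) ^ 7 *
            (16 ^ k * (A / 8)) ^ 2 = 16 * 10 ^ 16 * (((1 / 2) ^ k) ^ 8 * (16 ^ k) ^ 2) := by
            rw [hD, pow_succ]
            field_simp
            ring
          rw [e, ← pow_mul, ← pow_mul, mul_comm k 8, mul_comm k 2, pow_mul, pow_mul, ← mul_pow]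
          norm_num)
      intro δ hδ hδB
      have := hst δ hδ (by
        have hB' : 0 < B * (1 / 256) ^ k := by positivity
        rw [pow_succ, pow_succ] at hδB
        set p : ℝ := (1 / 2) ^ k
        set q : ℝ := B * (1 / 256) ^ k
        calc 256 * (1 + p / 4) * δ ≤ 256 * (1 + p / 4) *
              (B * ((1 / 256) ^ k * (1 / 256)) * (1 + p * (1 / 2)) / 2) := by gcongr
          _ = q * ((1 + p / 4) * (1 + p / 2)) / 2 := by simp only [q]; ring
          _ ≤ q * (1 + p) / 2 := by
            gcongr
            nlinarith)
      refine le_trans (le_of_eq ?_) this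
      ring
  -- conclusion
  have hv : 0 < A / 8 * √(B / 2) := by positivity
  obtain ⟨r, hr, hr2⟩ := small_Icc (g T) hz hv
  obtain ⟨k, hk⟩ := exists_pow_lt_of_lt_one (show 0 < r / (B / 2) by positivity)
    (show (1 / 256 : ℝ) < 1 by norm_num)
  set δ := B / 2 * (1 / 256) ^ k with hδ
  have hδ0 : 0 < δ := by positivity
  have hδr : δ < r := by
    rw [lt_div_iff₀ (by positivity)] at hk; linarith
  have hp : (0:ℝ) < (1 / 2) ^ k := by positivity
  have hp1 : ((1:ℝ) / 2) ^ k ≤ 1 := pow_le_one₀ (by norm_num) (by norm_num)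
  have l1 := key k δ hδ0 (by
    have : 0 < B * (1 / 256) ^ k := by positivity
    rw [hδ]; nlinarith)
  have l2 := N0_mono hf hc hδ0 (mul_nonneg hDpos.le (by linarith : (0:ℝ) ≤ 1 - (1 / 2) ^ k))
    (show D * (1 - (1 / 2) ^ k) ≤ T by nlinarith)
  have l3 := N0_le (g T) hδ0
  have l4 := hr2 δ hδr hδ0
  have l5 : 16 ^ k * (A / 8) * √δ = A / 8 * √(B / 2) := by
    have : √((1 / 256 : ℝ) ^ k) = (1 / 16) ^ k := by
      rw [show (1 / 256 : ℝ) = (1 / 16) ^ 2 by norm_num, ← pow_mul, mul_comm, pow_mul,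
        Real.sqrt_sq (by positivity)]
    rw [hδ, Real.sqrt_mul (by positivity), this]
    have : (16:ℝ) ^ k * (1 / 16) ^ k = 1 := by rw [← mul_pow]; norm_num
    linear_combination (A / 8 * √(B / 2)) * this
  linarith
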